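/- Let R = ℤ[f,g] and let T : y² + ((1+g)x + f)y = x³ + fx² be the Weierstrass curve over R with a₁ = 1+g, a₂ = f, a₃ = f, a₄ = a₆ = 0. For N ≥ 1 let b_N = ψ_N(0,0) ∈ ℤ[f,g] be the N-th division polynomial of T evaluated at (x, y) = (0, 0). If M and N are positive integers with M ∣ N, then b_M divides b_N in ℤ[f,g]. -/

import Mathlib

open Polynomial WeierstrassCurve

/-- The universal Tate normal curve `T : y² + ((1+g)x + f)y = x³ + fx²` over `ℤ[f,g]`,
where `f = X 0` and `g = X 1` in `MvPolynomial (Fin 2) ℤ`. -/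
noncomputable def tateCurve : WeierstrassCurve (MvPolynomial (Fin 2) ℤ) :=
  ⟨1 + MvPolynomial.X 1, MvPolynomial.X 0, MvPolynomial.X 0, 0, 0⟩

/-- `b_N = ψ_N(0,0)`, the `N`-th division polynomial of the universal Tate normal curve
evaluated at `(x, y) = (0, 0)`. -/
noncomputable def tateB (N : ℤ) : MvPolynomial (Fin 2) ℤ :=
  (tateCurve.Ψ N).evalEval 0 0

namespace TateAux

open IsEllipticNet

section Elliptic

variable {R : Type*} [CommRing R] [IsDomain R] {W : ℤ → R}

/-- Plücker-type step: if all relations against a fixed pair `(e, z)` hold, with nonzero atom,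
then all relations hold. -/
lemma atomRel_of_base (e z : ℤ) (S : ℤ → Prop) (ht : atom W e z ≠ 0)
    (h : ∀ a b, S a → S b → atomRel W a b e z = 0) {a b c d : ℤ}
    (ha : S a) (hb : S b) (hc : S c) (hd : S d) : atomRel W a b c d = 0 := by
  have hab := h a b ha hb
  have hac := h a c ha hc
  have had := h a d ha hd
  have hbc := h b c hb hc
  have hbd := h b d hb hd
  have hcd := h c d hc hd
  have key : atom W e z ^ 2 * atomRel W a b c d = 0 := by
    unfold atomRel at *
    linear_combination
      atom W e z * atom W c d * hab
        + (atom W a e * atom W b z - atom W a z * atom W b e) * hcd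
        - atom W e z * atom W b d * hac
        - (atom W a e * atom W c z - atom W a z * atom W c e) * hbd
        + atom W e z * atom W b c * had
        + (atom W a e * atom W d z - atom W a z * atom W d e) * hbc
  exact (mul_eq_zero.mp key).resolve_left (pow_ne_zero _ ht)

lemma atomRel_swap (odd : W.Odd) (a b c d : ℤ) :
    atomRel W b a c d = - atomRel W a b c d := by
  have h := neg_atom odd a b
  unfold atomRel
  linear_combination -atom W c d * h

/-- The induction hypothesis. -/
def Good (W : ℤ → R) (n : ℤ) : Prop :=
  ∀ a b : ℤ, a % 2 = b % 2 → |a| ≤ n → |b| ≤ n →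
    (a % 2 = 0 → atomRel W a b 2 0 = 0) ∧ (a % 2 = 1 → atomRel W a b 3 1 = 0)

lemma Good.all (h1 : W 1 ≠ 0) (h2 : W 2 ≠ 0) {n : ℤ} (hn : Good W n)
    {a b c d : ℤ} (parity : d % 2 = a % 2 ∧ d % 2 = b % 2 ∧ d % 2 = c % 2)
    (ha : |a| ≤ n) (hb : |b| ≤ n) (hc : |c| ≤ n) (hd : |d| ≤ n) : atomRel W a b c d = 0 := by
  rcases Int.emod_two_eq_zero_or_one d with hd0 | hd0
  · refine atomRel_of_base 2 0 (fun x ↦ x % 2 = 0 ∧ |x| ≤ n) ?_ ?_ ⟨by lia, ha⟩ ⟨by lia, hb⟩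
      ⟨by lia, hc⟩ ⟨by lia, hd⟩
    · have := atom_even W 1 0
      norm_num at this
      simp [this, h1]
    · intro x y hx hy
      exact (hn x y (by lia) hx.2 hy.2).1 hx.1
  · refine atomRel_of_base 3 1 (fun x ↦ x % 2 = 1 ∧ |x| ≤ n) ?_ ?_ ⟨by lia, ha⟩ ⟨by lia, hb⟩
      ⟨by lia, hc⟩ ⟨by lia, hd⟩
    · have := atom_odd W 1 0
      norm_num at this
      simp [this, h1, h2]
    · intro x y hx hy
      exact (hn x y (by lia) hx.2 hy.2).2 hx.1

lemma good_step (odd : W.Odd) (h1 : W 1 ≠ 0) (h2 : W 2 ≠ 0)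
    (ho : ∀ m, rel W (m + 1) m 1 0 = 0) (he : ∀ m, rel W (m + 1) (m - 1) 1 0 = 0)
    {n : ℤ} (hn : Good W n) {a b : ℤ} (hab : a % 2 = b % 2) (hb : 0 ≤ b) (hlt : b < a)
    (ha : a ≤ n + 1) :
    (a % 2 = 0 → atomRel W a b 2 0 = 0) ∧ (a % 2 = 1 → atomRel W a b 3 1 = 0) := by
  constructor
  · intro h0
    by_cases hb2 : b = a - 2
    · obtain ⟨m, rfl⟩ : ∃ m, a = 2 * (m + 1) := ⟨a / 2 - 1, by lia⟩
      have := ho m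
      rw [rel_eq] at this
      rw [hb2]
      convert this using 2 <;> ring
    · rw [← atomRel_avg_sub W (by lia)]
      apply hn.all h1 h2 (by lia) <;> rw [abs_le] <;> constructor <;> lia
  · intro h0
    by_cases hb2 : b = a - 2
    · obtain ⟨m, rfl⟩ : ∃ m, a = 2 * m + 1 := ⟨a / 2, by lia⟩
      have := he m
      rw [rel_eq, ← atomRel_avg_sub W (by lia)] at this
      rw [hb2, ← atomRel_neg₄, ← this]
      congr 1 <;> lia
    · rw [← atomRel_avg_sub W (by lia)]
      apply hn.all h1 h2 (by lia) <;> rw [abs_le] <;> constructor <;> lia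

lemma good_all (odd : W.Odd) (h0 : W 0 = 0) (h1 : W 1 ≠ 0) (h2 : W 2 ≠ 0)
    (ho : ∀ m, rel W (m + 1) m 1 0 = 0) (he : ∀ m, rel W (m + 1) (m - 1) 1 0 = 0)
    (n : ℕ) : Good W n := by
  induction n with
  | zero =>
    intro a b _ ha hb
    have ha' : a = 0 := by simpa using ha
    have hb' : b = 0 := by simpa using hb
    subst ha' hb'
    simp [h0]
  | succ n ih =>
    intro a b hab ha hb
    rw [← atomRel_abs₁ odd, ← atomRel_abs₂ odd, ← atomRel_abs₁ odd a b 3,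
      ← atomRel_abs₂ odd |a| b 3]
    have hpa : |a| % 2 = a % 2 := by rcases abs_choice a with h | h <;> rw [h] <;> lia
    have hpb : |b| % 2 = b % 2 := by rcases abs_choice b with h | h <;> rw [h] <;> lia
    have ha0 := abs_nonneg a
    have hb0 := abs_nonneg b
    rw [← hpa]
    rw [← hpa, ← hpb] at hab
    push_cast at ha hb
    generalize |a| = x at *
    generalize |b| = y at *
    rcases lt_trichotomy x y with h | h | h
    · rw [atomRel_swap odd y x, atomRel_swap odd y x, neg_eq_zero, neg_eq_zero, hab]
      exact good_step odd h1 h2 ho he ih hab.symm ha0 h hb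
    · subst h; simp [h0]
    · exact good_step odd h1 h2 ho he ih hab hb0 h ha

lemma elliptic (odd : W.Odd) (h0 : W 0 = 0) (h1 : W 1 ≠ 0) (h2 : W 2 ≠ 0)
    (ho : ∀ m, rel W (m + 1) m 1 0 = 0) (he : ∀ m, rel W (m + 1) (m - 1) 1 0 = 0)
    (p q : ℤ) : rel W p q 1 0 = 0 := by
  rw [rel_eq]
  have := good_all odd h0 h1 h2 ho he ((|2 * p| + |2 * q|).toNat)
  have hp := abs_nonneg (2 * p)
  have hq := abs_nonneg (2 * q)
  have h := (this (2 * p) (2 * q) (by lia) (by lia) (by lia)).1 (by lia)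
  simpa using h

end Elliptic

lemma normEDS_rel {R : Type*} [CommRing R] [IsDomain R] (b c d : R) (hb : b ≠ 0) (p q : ℤ) :
    rel (normEDS b c d) p q 1 0 = 0 := by
  apply elliptic
  · intro n; exact normEDS_neg ..
  · simp
  · simp
  · simpa
  · intro m
    rw [rel_odd, normEDS_odd, normEDS_one]; ring
  · intro m
    rw [rel_even, normEDS_two, normEDS_even, normEDS_one]; ring

lemma normEDS_dvd_of_ne {R : Type*} [CommRing R] [IsDomain R] (b c d : R) (hb : b ≠ 0)
    (k : ℤ) (hk : normEDS b c d k ≠ 0) (n : ℕ) :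
    normEDS b c d k ∣ normEDS b c d (n * k) := by
  induction n using Nat.strong_induction_on with
  | _ n ih =>
    obtain ⟨m, rfl | rfl⟩ := Nat.even_or_odd' n
    · rcases Nat.eq_zero_or_pos m with rfl | hm
      · simp
      · have := (ih m (by lia)).trans (normEDS_dvd_normEDS_two_mul b c d (m * k))
        convert this using 2
        push_cast; ring
    · rcases Nat.eq_zero_or_pos m with rfl | hm
      · simp
      · obtain ⟨u, hu⟩ := ih m (by lia)
        obtain ⟨v, hv⟩ := ih (m + 1) (by lia)
        have h := normEDS_rel b c d hb (((m + 1 : ℕ) : ℤ) * k) (m * k)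
        rw [rel] at h
        have e1 : ((m + 1 : ℕ) : ℤ) * k + m * k + 0 = ((2 * m + 1 : ℕ) : ℤ) * k := by
          push_cast; ring
        have e2 : ((m + 1 : ℕ) : ℤ) * k - m * k = k := by push_cast; ring
        rw [e1, e2] at h
        simp only [add_zero, normEDS_one, mul_one] at h
        rw [hu, hv] at h
        refine ⟨normEDS b c d (((m + 1 : ℕ) : ℤ) * k + 1) * normEDS b c d (((m + 1 : ℕ) : ℤ) * k - 1)
          * u ^ 2 - normEDS b c d (m * k + 1) * normEDS b c d (m * k - 1) * v ^ 2, ?_⟩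
        apply mul_left_cancel₀ hk
        linear_combination h

lemma normEDS_int (n : ℕ) : normEDS (2 : ℤ) 3 2 n = n := by
  induction n using normEDSRec with
  | zero => simp
  | one => simp
  | two => simp
  | three => simp
  | four => simp
  | even m h1 h2 h3 h4 h5 =>
    have h := normEDS_even (2 : ℤ) 3 2 (m + 3)
    push_cast at *
    have e1 : (m : ℤ) + 3 - 1 = m + 2 := by ring
    have e2 : (m : ℤ) + 3 + 2 = m + 5 := by ring
    have e3 : (m : ℤ) + 3 - 2 = m + 1 := by ring
    have e4 : (m : ℤ) + 3 + 1 = m + 4 := by ring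
    rw [e1, e2, e3, e4, h1, h2, h3, h4, h5] at h
    apply mul_right_cancel₀ (two_ne_zero (α := ℤ))
    rw [h]; ring
  | odd m h1 h2 h3 h4 =>
    have h := normEDS_odd (2 : ℤ) 3 2 (m + 2)
    push_cast at *
    have e1 : (m : ℤ) + 2 - 1 = m + 1 := by ring
    have e2 : (m : ℤ) + 2 + 2 = m + 4 := by ring
    have e4 : (m : ℤ) + 2 + 1 = m + 3 := by ring
    rw [e1, e2, e4, h1, h2, h3, h4] at h
    rw [h]; ring

/-- `normEDS` is a divisibility sequence, over any commutative ring. -/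
lemma normEDS_dvd {R : Type*} [CommRing R] (b c d : R) (k : ℕ) (hk : 1 ≤ k) (n : ℕ) :
    normEDS b c d k ∣ normEDS b c d (n * k) := by
  let F : MvPolynomial (Fin 3) ℤ →+* R := MvPolynomial.eval₂Hom (Int.castRingHom R) ![b, c, d]
  let G : MvPolynomial (Fin 3) ℤ →+* ℤ := MvPolynomial.eval₂Hom (Int.castRingHom ℤ) ![2, 3, 2]
  have hne : normEDS (MvPolynomial.X 0 : MvPolynomial (Fin 3) ℤ) (MvPolynomial.X 1)
      (MvPolynomial.X 2) k ≠ 0 := by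
    intro h
    have := congrArg G h
    rw [map_normEDS, map_zero] at this
    simp only [G, MvPolynomial.eval₂Hom_X'] at this
    have h' := normEDS_int k
    change normEDS (2 : ℤ) 3 2 k = 0 at this
    lia
  have := map_dvd F (normEDS_dvd_of_ne _ _ _ (MvPolynomial.X_ne_zero 0) k hne n)
  rw [map_normEDS, map_normEDS] at this
  simpa [F] using this

lemma tateB_eq (n : ℤ) : tateB n =
    normEDS (MvPolynomial.X 0) (tateCurve.Ψ₃.eval 0) (tateCurve.preΨ₄.eval 0) n := by
  have h2 : tateCurve.ψ₂.evalEval 0 0 = MvPolynomial.X 0 := by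
    simp [ψ₂, Affine.polynomialY, evalEval, tateCurve]
  have hsq : (tateCurve.Ψ₂Sq).eval 0 = MvPolynomial.X 0 ^ 2 := by
    simp [Ψ₂Sq, b₆, tateCurve]
  have hp : (tateCurve.preΨ n).eval 0 = preNormEDS (MvPolynomial.X 0 ^ 4)
      (tateCurve.Ψ₃.eval 0) (tateCurve.preΨ₄.eval 0) n := by
    have := map_preNormEDS (Polynomial.evalRingHom (0 : MvPolynomial (Fin 2) ℤ))
      (tateCurve.Ψ₂Sq ^ 2) tateCurve.Ψ₃ tateCurve.preΨ₄ n
    simp only [coe_evalRingHom, eval_pow, hsq, ← pow_mul] at this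
    exact this
  rw [tateB, WeierstrassCurve.Ψ, normEDS, ← hp]
  split_ifs
  · rw [evalEval_mul, h2, evalEval_C]
  · simp [evalEval_C]

end TateAux

/-- If `M` and `N` are positive integers with `M ∣ N`, then `b_M` divides
`b_N` in `ℤ[f,g]`. -/
theorem tateB_dvd_tateB (M N : ℕ) (hM : 1 ≤ M) (hN : 1 ≤ N) (hMN : M ∣ N) :
    tateB M ∣ tateB N := by
  obtain ⟨n, rfl⟩ := hMN
  rw [TateAux.tateB_eq, TateAux.tateB_eq, mul_comm M n]
  push_cast
  exact TateAux.normEDS_dvd _ _ _ M hM n
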